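/- Let p > 0, b > 0, θ ∈ ℝ, ρ ∈ (−1, 1). Let W have the Gamma distribution of shape p and rate b²/2, independent of (Z₁, Z₂) having the bivariate standard normal density with correlation ρ, and set X_i = θW + √W·Z_i, i = 1, 2, with common marginal distribution function F. Then the coefficient of lower tail dependence vanishes: lim_{u→0⁺} P(X₁ ≤ F^{−1}(u) | X₂ ≤ F^{−1}(u)) = 0; i.e., λ_L(u) = P(X₁ ≤ F^{−1}(u), X₂ ≤ F^{−1}(u))/u → 0 as u → 0⁺. -/

import Mathlib

open MeasureTheory Real Set Filter

/-!
Write `r = b² / 2`, and let `s₁ = θ + √(θ² + b²)` be the positive root of `s² / 2 - θ s = r`.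

* The marginal lower tail is at least of order `e^{s x}` for every `s > s₁`: when `W ≈ κ y` with
  `κ = 1 / (s - θ)`, the event `θ W + √W Z₁ ≤ -y` only asks for `Z₁ ≈ -((1 + θ κ) / √κ) √y`, and the
  rates `r κ` and `(1 + θ κ)² / (2 κ)` of these two independent events add up to less than `s`.
* On the joint lower tail `X₁ + X₂ = 2 θ W + √W (Z₁ + Z₂) ≤ 2 x`, where `Z₁ + Z₂` has variance
  `2 (1 + ρ)`, so the Chernoff bound at `-s / 2` gives order `e^{s x}` as soon as
  `(1 + ρ) s² / 4 - θ s < r`.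

Since `(1 + ρ) / 4 < 1 / 2`, the second condition holds at `s₁` with strict inequality, hence also
slightly beyond it: the joint tail decays exponentially faster than the marginal one.
-/

section

open ProbabilityTheory Asymptotics Topology
open scoped NNReal

/-! ### Tails of Gamma and Gaussian laws -/

lemma mul_measureReal_le_measureReal_withDensity {α : Type*} [MeasurableSpace α] {μ : Measure α}
    {g : α → ℝ} [IsFiniteMeasure (μ.withDensity fun x => ENNReal.ofReal (g x))] {s : Set α}
    (hs : MeasurableSet s) {m : ℝ} (hm : ∀ x ∈ s, m ≤ g x) :
    m * μ.real s ≤ (μ.withDensity fun x => ENNReal.ofReal (g x)).real s := by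
  have hle : ENNReal.ofReal m * μ s ≤ (μ.withDensity fun x => ENNReal.ofReal (g x)) s := by
    rw [withDensity_apply _ hs, ← setLIntegral_const]
    exact setLIntegral_mono' hs fun x hx => ENNReal.ofReal_le_ofReal (hm x hx)
  calc m * μ.real s ≤ (ENNReal.ofReal m * μ s).toReal := by
        rw [ENNReal.toReal_mul, ENNReal.toReal_ofReal']
        exact mul_le_mul_of_nonneg_right (le_max_left m 0) measureReal_nonneg
    _ ≤ _ := ENNReal.toReal_mono (measure_ne_top _ _) hle

lemma isBigO_measureReal_withDensity_Icc {f g : ℝ → ℝ} {x₀ : ℝ}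
    [IsFiniteMeasure (volume.withDensity fun x => ENNReal.ofReal (g x))]
    (hf : AntitoneOn f (Ici x₀)) (hf₀ : ∀ x, 0 ≤ f x) (hg₀ : ∀ x, 0 ≤ g x) (hfg : f =O[atTop] g) :
    (fun x => f (x + 1)) =O[atTop]
      fun x => (volume.withDensity fun x => ENNReal.ofReal (g x)).real (Icc x (x + 1)) := by
  obtain ⟨C, hC, hfg⟩ := hfg.exists_pos
  obtain ⟨x₁, hx₁⟩ := eventually_atTop.1 hfg.bound
  refine IsBigO.of_bound C ?_
  filter_upwards [eventually_ge_atTop x₀, eventually_ge_atTop x₁] with x hx₀ hx₁'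
  have hdensity : ∀ u ∈ Icc x (x + 1), C⁻¹ * f (x + 1) ≤ g u := fun u hu => by
    have hfu : f u ≤ C * g u := by
      simpa only [norm_of_nonneg (hf₀ u), norm_of_nonneg (hg₀ u)] using hx₁ u (hx₁'.trans hu.1)
    rw [inv_mul_le_iff₀ hC]
    exact (hf (hx₀.trans hu.1) (hx₀.trans (hu.1.trans hu.2)) hu.2).trans hfu
  have hmass := mul_measureReal_le_measureReal_withDensity (μ := volume) measurableSet_Icc hdensity
  rwa [Real.volume_real_Icc, add_sub_cancel_left, max_eq_left zero_le_one, mul_one,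
    inv_mul_le_iff₀ hC, ← norm_of_nonneg (hf₀ _), ← norm_of_nonneg measureReal_nonneg] at hmass

lemma withDensity_eq_gammaMeasure (a r : ℝ) :
    (volume.withDensity fun w : ℝ => ENNReal.ofReal
      (if 0 < w then r ^ a * w ^ (a - 1) * exp (-r * w) / Gamma a else 0)) = gammaMeasure a r := by
  refine withDensity_congr_ae ?_
  filter_upwards [Measure.ae_ne volume 0] with w hw
  rcases hw.lt_or_gt with hneg | hpos
  · rw [gammaPDF_of_neg hneg, if_neg hneg.le.not_gt, ENNReal.ofReal_zero]
  · rw [gammaPDF_of_nonneg hpos.le, if_pos hpos, neg_mul]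
    congr 1
    ring

lemma ae_nonneg_gammaMeasure (a r : ℝ) : ∀ᵐ x ∂gammaMeasure a r, 0 ≤ x := by
  refine (ae_withDensity_iff (measurable_gammaPDFReal a r).ennreal_ofReal).2
    (ae_of_all _ fun x hx => ?_)
  exact not_lt.1 fun hneg => hx (gammaPDF_of_neg hneg)

lemma integrable_exp_mul_gammaMeasure {a r t : ℝ} (ha : 0 < a) (hr : 0 < r) (ht : t < r) :
    Integrable (fun x => exp (t * x)) (gammaMeasure a r) := by
  have hkernel : IntegrableOn (fun x : ℝ => x ^ (a - 1) * exp (-(r - t) * x)) (Ici 0) := by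
    have h := integrableOn_rpow_mul_exp_neg_mul_rpow (s := a - 1) (by linarith) one_pos
      (sub_pos.2 ht)
    simp only [rpow_one] at h
    rwa [integrableOn_Ici_iff_integrableOn_Ioi]
  refine (integrable_withDensity_iff (measurable_gammaPDFReal a r).ennreal_ofReal
    (ae_of_all _ fun _ => ENNReal.ofReal_lt_top)).2 ?_
  refine ((integrable_indicator_iff measurableSet_Ici).2
    (hkernel.const_mul (r ^ a / Gamma a))).congr (ae_of_all _ fun x => ?_)
  dsimp only
  rw [ENNReal.toReal_ofReal (gammaPDFReal_nonneg ha hr x), gammaPDFReal]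
  split_ifs with hx
  · rw [indicator_of_mem (mem_Ici.2 hx), show -(r - t) * x = -(r * x) + t * x by ring, exp_add]
    ring
  · rw [indicator_of_notMem (notMem_Ici.2 (not_le.1 hx)), mul_zero]

lemma isBigO_exp_neg_gammaPDFReal {a r c : ℝ} (ha : 0 < a) (hr : 0 < r) (hc : r < c) :
    (fun x => exp (-c * x)) =O[atTop] gammaPDFReal a r := by
  have hpow := (isLittleO_exp_neg_mul_rpow_atTop (sub_pos.2 hc) (a - 1)).isBigO
  have hmul := ((hpow.mul (isBigO_refl (fun x => exp (-(r * x))) atTop)).const_mul_right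
      (c := r ^ a / Gamma a) (by have := Gamma_pos_of_pos ha; positivity))
  refine (hmul.congr' ?_ ?_)
  · exact .of_forall fun x => by dsimp only; rw [← exp_add]; ring_nf
  · filter_upwards [eventually_ge_atTop 0] with x hx
    rw [gammaPDFReal, if_pos hx, mul_assoc]

lemma isBigO_gammaMeasure_Icc {a r c : ℝ} (ha : 0 < a) (hr : 0 < r) (hc : r < c) :
    (fun x => exp (-c * x)) =O[atTop] fun x => (gammaMeasure a r).real (Icc x (x + 1)) := by
  have : IsFiniteMeasure (volume.withDensity fun x => ENNReal.ofReal (gammaPDFReal a r x)) :=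
    have := isProbabilityMeasure_gammaMeasure ha hr
    inferInstanceAs (IsFiniteMeasure (gammaMeasure a r))
  have hanti : Antitone fun x => exp (-c * x) := fun x y hxy =>
    exp_le_exp.2 (mul_le_mul_of_nonpos_left hxy (by linarith))
  refine IsBigO.trans ?_ (isBigO_measureReal_withDensity_Icc (hanti.antitoneOn (Ici 0))
    (fun _ => (exp_pos _).le) (gammaPDFReal_nonneg ha hr) (isBigO_exp_neg_gammaPDFReal ha hr hc))
  refine Real.isBigO_exp_comp_exp_comp.2 (isBoundedUnder_of ⟨c, fun x => le_of_eq ?_⟩)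
  simp only [Pi.sub_apply]
  ring

lemma isBoundedUnder_mul_add_sq_sub_mul_sq {q₀ q : ℝ} (hq : q₀ < q) (d : ℝ) (l : Filter ℝ) :
    IsBoundedUnder (· ≤ ·) l fun t => q₀ * (t + d) ^ 2 - q * t ^ 2 := by
  have hpos := sub_pos.2 hq
  refine isBoundedUnder_of ⟨q₀ * d ^ 2 + (q₀ * d) ^ 2 / (q - q₀), fun t => ?_⟩
  have hsq : q₀ * d ^ 2 + (q₀ * d) ^ 2 / (q - q₀) - (q₀ * (t + d) ^ 2 - q * t ^ 2)
      = (q - q₀) * (t - q₀ * d / (q - q₀)) ^ 2 := by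
    field_simp
    ring
  rw [← sub_nonneg, hsq]
  positivity

lemma isBigO_exp_neg_sq_gaussianPDFReal_add {v : ℝ≥0} (hv : v ≠ 0) {q : ℝ} (hq : (2 * v : ℝ)⁻¹ < q)
    (d : ℝ) (l : Filter ℝ) :
    (fun t => exp (-q * t ^ 2)) =O[l] fun t => gaussianPDFReal 0 v (t + d) := by
  simp only [gaussianPDFReal]
  refine IsBigO.const_mul_right (by positivity) (Real.isBigO_exp_comp_exp_comp.2 ?_)
  convert isBoundedUnder_mul_add_sq_sub_mul_sq hq d l using 2 with t
  rw [Pi.sub_apply]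
  field_simp
  ring

lemma antitoneOn_gaussianPDFReal (μ : ℝ) (v : ℝ≥0) :
    AntitoneOn (gaussianPDFReal μ v) (Ici μ) := by
  intro x hx y _ hxy
  have hx : 0 ≤ x - μ := sub_nonneg.2 hx
  simp only [gaussianPDFReal]
  gcongr

lemma measureReal_gaussianReal_Iic_neg (v : ℝ≥0) (x : ℝ) :
    (gaussianReal 0 v).real (Iic (-x)) = (gaussianReal 0 v).real (Ici x) := by
  conv_lhs => rw [← neg_zero, ← gaussianReal_map_neg]
  rw [map_measureReal_apply measurable_neg measurableSet_Iic]
  simp only [neg_preimage, neg_Iic, neg_neg]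

lemma isBigO_gaussianReal_Iic {v : ℝ≥0} (hv : v ≠ 0) {q : ℝ} (hq : (2 * v : ℝ)⁻¹ < q) (d : ℝ) :
    (fun t => exp (-q * t ^ 2)) =O[atTop] fun t => (gaussianReal 0 v).real (Iic (-(t + d))) := by
  have hdensity : gaussianReal 0 v =
      volume.withDensity fun x => ENNReal.ofReal (gaussianPDFReal 0 v x) :=
    gaussianReal_of_var_ne_zero 0 hv
  have : IsFiniteMeasure (volume.withDensity fun x => ENNReal.ofReal (gaussianPDFReal 0 v x)) :=
    hdensity ▸ inferInstance
  have hIcc : (fun x => gaussianPDFReal 0 v (x + 1)) =O[atTop]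
      fun x => (gaussianReal 0 v).real (Icc x (x + 1)) := by
    rw [hdensity]
    exact isBigO_measureReal_withDensity_Icc (antitoneOn_gaussianPDFReal 0 v)
      (gaussianPDFReal_nonneg 0 v) (gaussianPDFReal_nonneg 0 v) (isBigO_refl _ _)
  calc (fun t => exp (-q * t ^ 2))
      =O[atTop] fun t => gaussianPDFReal 0 v (t + d + 1) := by
        simpa only [add_assoc] using isBigO_exp_neg_sq_gaussianPDFReal_add hv hq (d + 1) atTop
    _ =O[atTop] fun t => (gaussianReal 0 v).real (Icc (t + d) (t + d + 1)) :=
        hIcc.comp_tendsto (tendsto_atTop_add_const_right atTop d tendsto_id)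
    _ =O[atTop] fun t => (gaussianReal 0 v).real (Iic (-(t + d))) := by
        refine .of_norm_le fun t => ?_
        rw [norm_of_nonneg measureReal_nonneg, measureReal_gaussianReal_Iic_neg]
        exact measureReal_mono Icc_subset_Ici_self

/-! ### Linear combinations of correlated Gaussians -/

lemma measurePreserving_withDensity_comp {α β : Type*} [MeasurableSpace α] [MeasurableSpace β]
    {μ : Measure α} {ν : Measure β} {T : α → β} (hT : MeasurePreserving T μ ν) {f : β → ENNReal}
    (hf : Measurable f) : MeasurePreserving T (μ.withDensity (f ∘ T)) (ν.withDensity f) := by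
  refine ⟨hT.measurable, Measure.ext fun s hs => ?_⟩
  rw [Measure.map_apply hT.measurable hs, withDensity_apply _ (hT.measurable hs),
    withDensity_apply _ hs]
  exact hT.setLIntegral_comp_preimage hs hf

/-- The law on `ℝ × ℝ` of two standard Gaussians with correlation `ρ`, given by its density. It is
the zero measure when `1 ≤ |ρ|`, since then `√(1 - ρ ^ 2) = 0`. -/
noncomputable def stdBivariateGaussian (ρ : ℝ) : Measure (ℝ × ℝ) :=
  volume.withDensity fun z : ℝ × ℝ => ENNReal.ofReal
    ((2 * π * √(1 - ρ ^ 2))⁻¹ *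
      exp (-(z.1 ^ 2 - 2 * ρ * z.1 * z.2 + z.2 ^ 2) / (2 * (1 - ρ ^ 2))))

variable {ρ : ℝ}

lemma gaussianPDFReal_mul_gaussianPDFReal_sub (hρ : |ρ| < 1) (x y : ℝ) :
    gaussianPDFReal 0 1 x * gaussianPDFReal 0 (1 - ρ ^ 2).toNNReal (y - ρ * x) =
      (2 * π * √(1 - ρ ^ 2))⁻¹ * exp (-(x ^ 2 - 2 * ρ * x * y + y ^ 2) / (2 * (1 - ρ ^ 2))) := by
  have hvar : 0 < 1 - ρ ^ 2 := sub_pos.2 ((sq_lt_one_iff_abs_lt_one ρ).2 hρ)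
  simp only [gaussianPDFReal, NNReal.coe_one, Real.coe_toNNReal _ hvar.le, sub_zero, mul_one]
  have hnorm : √(2 * π) * √(2 * π * (1 - ρ ^ 2)) = 2 * π * √(1 - ρ ^ 2) := by
    rw [Real.sqrt_mul (by positivity) (1 - ρ ^ 2), ← mul_assoc, Real.mul_self_sqrt (by positivity)]
  rw [mul_mul_mul_comm, ← mul_inv, hnorm, ← exp_add]
  congr 2
  field_simp
  ring

lemma hasLaw_regression_stdBivariateGaussian (hρ : |ρ| < 1) :
    HasLaw (fun z : ℝ × ℝ => (z.1, z.2 - ρ * z.1))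
      ((gaussianReal 0 1).prod (gaussianReal 0 (1 - ρ ^ 2).toNNReal)) (stdBivariateGaussian ρ) := by
  have hvar : (1 - ρ ^ 2).toNNReal ≠ 0 :=
    (Real.toNNReal_pos.2 (sub_pos.2 ((sq_lt_one_iff_abs_lt_one ρ).2 hρ))).ne'
  have hshear : MeasurePreserving (fun z : ℝ × ℝ => (z.1, z.2 - ρ * z.1)) :=
    (MeasurePreserving.id volume).skew_product (by fun_prop)
      (ae_of_all _ fun x => (measurePreserving_sub_right volume (ρ * x)).map_eq)
  have hdensity : stdBivariateGaussian ρ = volume.withDensity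
      ((fun w : ℝ × ℝ => gaussianPDF 0 1 w.1 * gaussianPDF 0 (1 - ρ ^ 2).toNNReal w.2) ∘
        fun z => (z.1, z.2 - ρ * z.1)) := by
    refine congrArg volume.withDensity (funext fun z => ?_)
    rw [Function.comp_apply, gaussianPDF, gaussianPDF,
      ← ENNReal.ofReal_mul (gaussianPDFReal_nonneg 0 1 z.1),
      gaussianPDFReal_mul_gaussianPDFReal_sub hρ]
  rw [gaussianReal_of_var_ne_zero 0 one_ne_zero, gaussianReal_of_var_ne_zero 0 hvar,
    prod_withDensity (measurable_gaussianPDF 0 _) (measurable_gaussianPDF 0 _), hdensity]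
  exact (measurePreserving_withDensity_comp hshear (by fun_prop)).hasLaw

lemma hasLaw_linearCombination_stdBivariateGaussian (hρ : |ρ| < 1) (α β : ℝ) :
    HasLaw (fun z : ℝ × ℝ => α * z.1 + β * z.2)
      (gaussianReal 0 (α ^ 2 + 2 * ρ * α * β + β ^ 2).toNNReal) (stdBivariateGaussian ρ) := by
  have hvar : 0 < 1 - ρ ^ 2 := sub_pos.2 ((sq_lt_one_iff_abs_lt_one ρ).2 hρ)
  set v := (1 - ρ ^ 2).toNNReal with hv
  have hsum : HasLaw (fun w : ℝ × ℝ => (α + β * ρ) * w.1 + β * w.2) _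
      ((gaussianReal 0 1).prod (gaussianReal 0 v)) :=
    IndepFun.hasLaw_fun_add (gaussianReal_const_mul measurePreserving_fst.hasLaw (α + β * ρ))
      (gaussianReal_const_mul measurePreserving_snd.hasLaw β)
      (indepFun_prod (measurable_const_mul (α + β * ρ)) (measurable_const_mul β))
  have hcomp := hsum.fun_comp (hasLaw_regression_stdBivariateGaussian hρ)
  rw [gaussianReal_conv_gaussianReal] at hcomp
  convert hcomp using 2 with z
  · ring
  · ring
  · rw [← Real.toNNReal_coe (r := NNReal.mk _ _ * 1 + _)]
    congr 1
    simp only [NNReal.coe_add, NNReal.coe_mul, NNReal.coe_mk, NNReal.coe_one, hv,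
      Real.coe_toNNReal _ hvar.le]
    ring

lemma hasLaw_fst_stdBivariateGaussian (hρ : |ρ| < 1) :
    HasLaw Prod.fst (gaussianReal 0 1) (stdBivariateGaussian ρ) := by
  simpa using hasLaw_linearCombination_stdBivariateGaussian hρ 1 0

lemma hasLaw_add_stdBivariateGaussian (hρ : |ρ| < 1) :
    HasLaw (fun z => z.1 + z.2) (gaussianReal 0 (2 * (1 + ρ)).toNNReal)
      (stdBivariateGaussian ρ) := by
  convert hasLaw_linearCombination_stdBivariateGaussian hρ 1 1 using 3 with z
  · exact (one_mul z.1).symm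
  · exact (one_mul z.2).symm
  · ring

/-! ### Tails of normal mean-variance mixtures -/

variable {Ω : Type*} [MeasurableSpace Ω] {P : Measure Ω}

lemma integrable_exp_mul_normalMixture [IsFiniteMeasure P] {W Z : Ω → ℝ} {v : ℝ≥0} {θ t : ℝ}
    (hW : AEMeasurable W P) (hW₀ : ∀ᵐ ω ∂P, 0 ≤ W ω) (hZ : HasLaw Z (gaussianReal 0 v) P)
    (hindep : IndepFun W Z P)
    (hint : Integrable (fun ω => exp ((t * θ + v * t ^ 2 / 2) * W ω)) P) :
    Integrable (fun ω => exp (t * (θ * W ω + √(W ω) * Z ω))) P := by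
  set f : ℝ × ℝ → ℝ := fun p => exp (t * (θ * p.1 + √p.1 * p.2)) with hf
  have hfm : StronglyMeasurable f := Measurable.stronglyMeasurable (by fun_prop)
  have hpair : HasLaw (fun ω => (W ω, Z ω)) ((P.map W).prod (gaussianReal 0 v)) P :=
    (indepFun_iff_hasLaw_prodMk_prod ⟨hW, rfl⟩ hZ).1 hindep
  have hsplit : ∀ w z, f (w, z) = exp (t * θ * w) * exp (t * √w * z) := fun w z => by
    rw [← exp_add, hf]
    ring_nf
  have hinner : ∀ w, 0 ≤ w →
      ∫ z, ‖f (w, z)‖ ∂gaussianReal 0 v = exp ((t * θ + v * t ^ 2 / 2) * w) := fun w hw => by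
    have hmgf := congrFun (mgf_id_gaussianReal (μ := 0) (v := v)) (t * √w)
    simp only [mgf, id] at hmgf
    have hnorm : ∀ z, ‖f (w, z)‖ = f (w, z) := fun z => norm_of_nonneg (exp_pos _).le
    simp only [hnorm]
    simp only [hsplit]
    rw [integral_const_mul, hmgf, ← exp_add, mul_pow, Real.sq_sqrt hw]
    ring_nf
  have hprod : Integrable f ((P.map W).prod (gaussianReal 0 v)) := by
    refine (integrable_prod_iff hfm.aestronglyMeasurable).2 ⟨ae_of_all _ fun w => ?_, ?_⟩
    · simpa only [hsplit] using (integrable_exp_mul_gaussianReal (t * √w)).const_mul _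
    · refine (integrable_map_measure hfm.norm.integral_prod_right'.aestronglyMeasurable hW).2
        (hint.congr ?_)
      filter_upwards [hW₀] with ω hω using (hinner _ hω).symm
  rw [← hpair.map_eq] at hprod
  exact (integrable_map_measure hfm.aestronglyMeasurable hpair.aemeasurable).1 hprod

lemma measureReal_and_le_le_exp_mul_mgf_add [IsFiniteMeasure P] {X Y : Ω → ℝ} {t : ℝ} (ht : t ≤ 0)
    (hint : Integrable (fun ω => exp (t * (X + Y) ω)) P) (x : ℝ) :
    P.real {ω | X ω ≤ x ∧ Y ω ≤ x} ≤ exp (-(2 * t) * x) * mgf (X + Y) P t :=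
  calc P.real {ω | X ω ≤ x ∧ Y ω ≤ x} ≤ P.real {ω | (X + Y) ω ≤ 2 * x} :=
        measureReal_mono fun ω hω => by
          have := add_le_add hω.1 hω.2
          simpa only [mem_ofPred_eq, Pi.add_apply, two_mul] using this
    _ ≤ exp (-t * (2 * x)) * mgf (X + Y) P t := measure_le_le_exp_mul_mgf _ ht hint
    _ = exp (-(2 * t) * x) * mgf (X + Y) P t := by ring_nf

lemma normalMixture_le_neg {θ κ y w z : ℝ} (hκ : 0 < κ) (hθκ : 0 ≤ 1 + θ * κ) (hy : κ⁻¹ ≤ y)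
    (hw : w ∈ Icc (κ * y) (κ * y + 1)) (hz : z ≤ -((1 + θ * κ) / √κ * √y + |θ|)) :
    θ * w + √w * z ≤ -y := by
  have hy₀ : 0 ≤ y := (inv_pos.2 hκ).le.trans hy
  have hone : 1 ≤ √w := Real.one_le_sqrt.2 (((inv_le_iff_one_le_mul₀' hκ).1 hy).trans hw.1)
  have hscale : (1 + θ * κ) * y ≤ √w * ((1 + θ * κ) / √κ * √y) :=
    calc (1 + θ * κ) * y = √(κ * y) * ((1 + θ * κ) / √κ * √y) := by
          rw [Real.sqrt_mul hκ.le]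
          field_simp
          rw [Real.sq_sqrt hy₀]
      _ ≤ √w * ((1 + θ * κ) / √κ * √y) := by gcongr; exact hw.1
  have hdrift : θ * (w - κ * y) ≤ √w * |θ| :=
    calc θ * (w - κ * y) ≤ |θ| * 1 :=
          mul_le_mul (le_abs_self θ) (by linarith [hw.2]) (by linarith [hw.1]) (abs_nonneg θ)
      _ ≤ √w * |θ| := by rw [mul_comm]; gcongr
  have hnoise : √w * z ≤ √w * (-((1 + θ * κ) / √κ * √y + |θ|)) := by gcongr
  linarith

lemma isBigO_measureReal_normalMixture_le_neg [IsFiniteMeasure P] {W Z : Ω → ℝ} {θ c q κ : ℝ}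
    (hindep : IndepFun W Z P) (hκ : 0 < κ) (hθκ : 0 < 1 + θ * κ)
    (hW : (fun w => exp (-c * w)) =O[atTop] fun w => P.real (W ⁻¹' Icc w (w + 1)))
    (hZ : (fun t => exp (-q * t ^ 2)) =O[atTop] fun t => P.real (Z ⁻¹' Iic (-(t + |θ|)))) :
    (fun y => exp (-(c * κ + q * ((1 + θ * κ) ^ 2 / κ)) * y)) =O[atTop]
      fun y => P.real {ω | θ * W ω + √(W ω) * Z ω ≤ -y} := by
  set β := (1 + θ * κ) / √κ with hβ
  have hβ₀ : 0 < β := by positivity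
  calc (fun y => exp (-(c * κ + q * ((1 + θ * κ) ^ 2 / κ)) * y))
      =ᶠ[atTop] fun y => exp (-c * (κ * y)) * exp (-q * (β * √y) ^ 2) := by
        filter_upwards [eventually_ge_atTop 0] with y hy
        rw [← exp_add, mul_pow, Real.sq_sqrt hy, hβ, div_pow, Real.sq_sqrt hκ.le]
        ring_nf
    _ =O[atTop] fun y => P.real (W ⁻¹' Icc (κ * y) (κ * y + 1)) *
          P.real (Z ⁻¹' Iic (-(β * √y + |θ|))) :=
        (hW.comp_tendsto (tendsto_id.const_mul_atTop hκ)).mul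
          (hZ.comp_tendsto (tendsto_sqrt_atTop.const_mul_atTop hβ₀))
    _ = fun y => P.real (W ⁻¹' Icc (κ * y) (κ * y + 1) ∩ Z ⁻¹' Iic (-(β * √y + |θ|))) := by
        funext y
        rw [measureReal_def, measureReal_def, measureReal_def, ← ENNReal.toReal_mul,
          hindep.measure_inter_preimage_eq_mul _ _ measurableSet_Icc measurableSet_Iic]
    _ =O[atTop] fun y => P.real {ω | θ * W ω + √(W ω) * Z ω ≤ -y} := by
        refine .of_norm_eventuallyLE ?_
        filter_upwards [eventually_ge_atTop κ⁻¹] with y hy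
        rw [norm_of_nonneg measureReal_nonneg]
        exact measureReal_mono fun ω hω => normalMixture_le_neg hκ hθκ.le hy hω.1 hω.2

lemma isBigO_exp_mul_measureReal_gammaNormal_le [IsFiniteMeasure P] {W Z : Ω → ℝ} {θ a r s : ℝ}
    (ha : 0 < a) (hr : 0 < r) (hW : HasLaw W (gammaMeasure a r) P)
    (hZ : HasLaw Z (gaussianReal 0 1) P) (hindep : IndepFun W Z P) (hs : 0 < s)
    (hrs : r < s ^ 2 / 2 - θ * s) :
    (fun x => exp (s * x)) =O[atBot] fun x => P.real {ω | θ * W ω + √(W ω) * Z ω ≤ x} := by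
  have hsθ : 0 < s - θ := by nlinarith
  set κ := (s - θ)⁻¹ with hκ
  have hκ₀ : 0 < κ := inv_pos.2 hsθ
  have hθκ : 1 + θ * κ = s * κ := by rw [hκ]; field_simp; ring
  have hcost : r * κ + 1 / 2 * ((1 + θ * κ) ^ 2 / κ) < s := by
    have h : r * κ < (s ^ 2 / 2 - θ * s) * κ := by gcongr
    have h' : (s ^ 2 - θ * s) * κ = s := by rw [hκ]; field_simp
    rw [hθκ, mul_pow, sq κ, ← mul_assoc, mul_div_cancel_right₀ _ hκ₀.ne']
    linarith
  obtain ⟨ε, hε, hεs⟩ : ∃ ε > 0,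
      (r + ε) * κ + (1 / 2 + ε) * ((1 + θ * κ) ^ 2 / κ) = s := by
    have hden : 0 < κ + (1 + θ * κ) ^ 2 / κ := by positivity
    refine ⟨_, div_pos (sub_pos.2 hcost) hden, ?_⟩
    linear_combination div_mul_cancel₀ (s - (r * κ + 1 / 2 * ((1 + θ * κ) ^ 2 / κ))) hden.ne'
  have hIcc : (fun w => exp (-(r + ε) * w)) =O[atTop] fun w => P.real (W ⁻¹' Icc w (w + 1)) := by
    simpa only [← hW.map_eq, map_measureReal_apply_of_aemeasurable hW.aemeasurable
      measurableSet_Icc] using isBigO_gammaMeasure_Icc ha hr (lt_add_of_pos_right r hε)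
  have hIic : (fun t => exp (-(1 / 2 + ε) * t ^ 2)) =O[atTop]
      fun t => P.real (Z ⁻¹' Iic (-(t + |θ|))) := by
    simpa only [← hZ.map_eq, map_measureReal_apply_of_aemeasurable hZ.aemeasurable
      measurableSet_Iic] using isBigO_gaussianReal_Iic one_ne_zero (by norm_num [hε]) |θ|
  have htop := isBigO_measureReal_normalMixture_le_neg hindep hκ₀ (hθκ ▸ mul_pos hs hκ₀) hIcc
    hIic
  simpa only [hεs, Function.comp_def, neg_mul_neg, neg_neg] using
    htop.comp_tendsto tendsto_neg_atBot_atTop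

lemma isBigO_measureReal_gammaNormal_and_le [IsFiniteMeasure P] {W : Ω → ℝ} {Z : Ω → ℝ × ℝ}
    {θ a r s : ℝ} (ha : 0 < a) (hr : 0 < r) (hρ : |ρ| < 1) (hW : HasLaw W (gammaMeasure a r) P)
    (hZ : HasLaw Z (stdBivariateGaussian ρ) P) (hindep : IndepFun W Z P) (hs : 0 ≤ s)
    (hrs : (1 + ρ) / 4 * s ^ 2 - θ * s < r) (l : Filter ℝ) :
    (fun x => P.real {ω | θ * W ω + √(W ω) * (Z ω).1 ≤ x ∧ θ * W ω + √(W ω) * (Z ω).2 ≤ x}) =O[l]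
      fun x => exp (s * x) := by
  set X : Ω → ℝ := fun ω => θ * W ω + √(W ω) * (Z ω).1
  set Y : Ω → ℝ := fun ω => θ * W ω + √(W ω) * (Z ω).2
  have hZsum : HasLaw (fun ω => (Z ω).1 + (Z ω).2) (gaussianReal 0 (2 * (1 + ρ)).toNNReal) P :=
    (hasLaw_add_stdBivariateGaussian hρ).fun_comp hZ
  have hW₀ : ∀ᵐ ω ∂P, 0 ≤ W ω := (hW.ae_iff (by fun_prop)).2 (ae_nonneg_gammaMeasure a r)
  have hexponent : -s / 2 * (2 * θ) + (2 * (1 + ρ)).toNNReal * (-s / 2) ^ 2 / 2 =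
      (1 + ρ) / 4 * s ^ 2 - θ * s := by
    rw [Real.coe_toNNReal _ (by linarith [(abs_lt.1 hρ).1])]
    ring
  have hWint : Integrable (fun ω => exp (((1 + ρ) / 4 * s ^ 2 - θ * s) * W ω)) P := by
    have hint := integrable_exp_mul_gammaMeasure ha hr hrs
    rw [← hW.map_eq] at hint
    exact hint.comp_aemeasurable hW.aemeasurable
  have hint : Integrable (fun ω => exp (-s / 2 * (X + Y) ω)) P := by
    have hmix := integrable_exp_mul_normalMixture (θ := 2 * θ) (t := -s / 2) hW.aemeasurable hW₀
      hZsum (hindep.comp measurable_id (measurable_fst.add measurable_snd)) (by rwa [hexponent])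
    refine hmix.congr (ae_of_all _ fun ω => ?_)
    simp only [X, Y, Pi.add_apply]
    ring_nf
  refine .of_bound (mgf (X + Y) P (-s / 2)) (.of_forall fun x => ?_)
  have hchernoff := measureReal_and_le_le_exp_mul_mgf_add (by linarith) hint x
  rw [norm_of_nonneg measureReal_nonneg, norm_of_nonneg (exp_pos _).le, mul_comm (mgf _ _ _)]
  rwa [show -(2 * (-s / 2)) = s by ring] at hchernoff

lemma exists_marginalRate_lt_jointRate {r θ : ℝ} (hr : 0 < r) (hρ : ρ < 1) :
    ∃ s' s, 0 < s' ∧ s' < s ∧ r < s' ^ 2 / 2 - θ * s' ∧ (1 + ρ) / 4 * s ^ 2 - θ * s < r := by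
  set s₁ := θ + √(θ ^ 2 + 2 * r)
  have hsqrt : |θ| < √(θ ^ 2 + 2 * r) := by
    rw [← Real.sqrt_sq_eq_abs]
    exact Real.sqrt_lt_sqrt (sq_nonneg θ) (by linarith)
  have hroot : s₁ ^ 2 / 2 - θ * s₁ = r := by
    linear_combination Real.sq_sqrt (show 0 ≤ θ ^ 2 + 2 * r by positivity) / 2
  have hs₁θ : θ < s₁ := by linarith [abs_nonneg θ]
  have hs₁₀ : 0 < s₁ := by linarith [neg_abs_le θ]
  have hjoint : (1 + ρ) / 4 * s₁ ^ 2 - θ * s₁ < r := by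
    rw [← hroot]
    nlinarith [pow_pos hs₁₀ 2]
  have hcont : Continuous fun s : ℝ => (1 + ρ) / 4 * s ^ 2 - θ * s := by fun_prop
  obtain ⟨s, hs, hs₁s⟩ := ((hcont.continuousWithinAt.eventually_lt_const hjoint).and
    (self_mem_nhdsWithin (s := Ioi s₁))).exists
  obtain ⟨s', hs₁s', hs's⟩ := exists_between (show s₁ < s from hs₁s)
  refine ⟨s', s, hs₁₀.trans hs₁s', hs's, ?_, hs⟩
  nlinarith [mul_pos (sub_pos.2 hs₁s') (show 0 < s' + s₁ - 2 * θ by linarith)]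

/-! ### Ratios along quantiles -/

lemma monotone_measureReal_le [IsFiniteMeasure P] (X : Ω → ℝ) :
    Monotone fun x => P.real {ω | X ω ≤ x} :=
  fun _ _ hxy => measureReal_mono fun _ hω => le_trans hω hxy

lemma pos_of_monotone_of_isBigO_atBot {F g : ℝ → ℝ} (hF : Monotone F) (hF₀ : ∀ x, 0 ≤ F x)
    (hg : ∀ x, g x ≠ 0) (hgF : g =O[atBot] F) (x : ℝ) : 0 < F x := by
  refine (hF₀ x).lt_of_ne' fun hx => ?_
  obtain ⟨y, hy, hyx⟩ := (hgF.eq_zero_imp.and (eventually_le_atBot x)).exists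
  exact hg y (hy (le_antisymm (hx ▸ hF hyx) (hF₀ y)))

lemma isLittleO_exp_mul_atBot {s s' : ℝ} (hs : s' < s) :
    (fun x => exp (s * x)) =o[atBot] fun x => exp (s' * x) := by
  refine Real.isLittleO_exp_comp_exp_comp.2 ?_
  simp only [← sub_mul]
  exact tendsto_id.const_mul_atBot_of_neg (sub_neg.2 hs)

lemma tendsto_atBot_of_eventually_rightInverse {α β : Type*} [LinearOrder α] [LinearOrder β]
    [TopologicalSpace β] [OrderTopology β] {F : α → β} {G : β → α} {c : β} (hF : Monotone F)
    (hc : ∀ x, c < F x) (hG : ∀ᶠ u in 𝓝[>] c, F (G u) = u) : Tendsto G (𝓝[>] c) atBot := by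
  refine tendsto_atBot.2 fun x => ?_
  filter_upwards [hG, Ioo_mem_nhdsGT (hc x)] with u hu hux
  exact (hF.reflect_lt (hu.symm ▸ hux.2)).le

lemma tendsto_comp_rightInverse_div_nhdsGT_zero {α : Type*} [LinearOrder α] {J F : α → ℝ}
    {G : ℝ → α} (hF : Monotone F) (hF₀ : ∀ x, 0 < F x) (hG : ∀ᶠ u in 𝓝[>] 0, F (G u) = u)
    (hJF : J =o[atBot] F) : Tendsto (fun u => J (G u) / u) (𝓝[>] 0) (𝓝 0) := by
  refine (hJF.tendsto_div_nhds_zero.comp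
    (tendsto_atBot_of_eventually_rightInverse hF hF₀ hG)).congr' ?_
  filter_upwards [hG] with u hu
  rw [Function.comp_apply, hu]

end

/-- Asymptotic lower-tail independence of the equi-skew GH model GH(0,R,(θ,θ),p,0,b)
(including the bivariate equi-skew Variance Gamma for p = 1/2, b = √(2/ν)):
λ_L(u) = P(X₁ ≤ F⁻¹(u), X₂ ≤ F⁻¹(u))/u → 0 as u → 0⁺, where F is the common continuous
strictly increasing marginal distribution function and F⁻¹ its quantile function. -/
theorem stmt_19 (p b θ ρ : ℝ) (hp : 0 < p) (hb : 0 < b) (hρ : ρ ∈ Set.Ioo (-1 : ℝ) 1)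
    {Ω : Type*} [MeasurableSpace Ω] (P : Measure Ω) [IsProbabilityMeasure P]
    (W Z₁ Z₂ : Ω → ℝ) (hW : Measurable W) (hZ : Measurable fun ω => (Z₁ ω, Z₂ ω))
    (hWlaw : Measure.map W P =
      volume.withDensity fun w : ℝ => ENNReal.ofReal
        (if 0 < w then
          (b ^ 2 / 2) ^ p * w ^ (p - 1) * Real.exp (-(b ^ 2 / 2) * w) / Real.Gamma p
        else 0))
    (hZlaw : Measure.map (fun ω => (Z₁ ω, Z₂ ω)) P =
      volume.withDensity fun z : ℝ × ℝ => ENNReal.ofReal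
        ((2 * Real.pi * Real.sqrt (1 - ρ ^ 2))⁻¹ *
          Real.exp (-(z.1 ^ 2 - 2 * ρ * z.1 * z.2 + z.2 ^ 2) / (2 * (1 - ρ ^ 2)))))
    (hindep : ProbabilityTheory.IndepFun W (fun ω => (Z₁ ω, Z₂ ω)) P)
    (X₁ X₂ : Ω → ℝ)
    (hX₁ : ∀ ω, X₁ ω = θ * W ω + Real.sqrt (W ω) * Z₁ ω)
    (hX₂ : ∀ ω, X₂ ω = θ * W ω + Real.sqrt (W ω) * Z₂ ω)
    (F Finv : ℝ → ℝ)
    (hF : ∀ x, F x = (P {ω | X₁ ω ≤ x}).toReal)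
    (hFmarg : ∀ x, F x = (P {ω | X₂ ω ≤ x}).toReal)
    (hFinv : ∀ u ∈ Ioo (0 : ℝ) 1, F (Finv u) = u) :
    Tendsto
      (fun u => (P {ω | X₁ ω ≤ Finv u ∧ X₂ ω ≤ Finv u}).toReal / u)
      (nhdsWithin 0 (Ioi 0)) (nhds 0) := by
  have hρ' : |ρ| < 1 := abs_lt.2 hρ
  have hr : 0 < b ^ 2 / 2 := by positivity
  have hWgamma : ProbabilityTheory.HasLaw W (ProbabilityTheory.gammaMeasure p (b ^ 2 / 2)) P :=
    ⟨hW.aemeasurable, hWlaw.trans (withDensity_eq_gammaMeasure p (b ^ 2 / 2))⟩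
  have hZgauss : ProbabilityTheory.HasLaw _ (stdBivariateGaussian ρ) P := ⟨hZ.aemeasurable, hZlaw⟩
  have hZ₁gauss : ProbabilityTheory.HasLaw Z₁ (ProbabilityTheory.gaussianReal 0 1) P :=
    (hasLaw_fst_stdBivariateGaussian hρ').fun_comp hZgauss
  obtain ⟨s', s, hs', hs's, hmarginalRate, hjointRate⟩ :=
    exists_marginalRate_lt_jointRate (θ := θ) hr hρ.2
  have hF' : F = fun x => P.real {ω | X₁ ω ≤ x} := funext hF
  have hmarginal : (fun x => exp (s' * x)) =O[atBot] F := by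
    simpa only [← hX₁, ← hF'] using isBigO_exp_mul_measureReal_gammaNormal_le hp hr
      hWgamma hZ₁gauss (hindep.comp measurable_id measurable_fst) hs' hmarginalRate
  have hjoint : (fun x => P.real {ω | X₁ ω ≤ x ∧ X₂ ω ≤ x}) =O[atBot] fun x => exp (s * x) := by
    simpa only [← hX₁, ← hX₂] using isBigO_measureReal_gammaNormal_and_le hp hr hρ' hWgamma hZgauss
      hindep (hs'.trans hs's).le hjointRate atBot
  have hFmono : Monotone F := hF' ▸ monotone_measureReal_le X₁
  have hFpos : ∀ x, 0 < F x := pos_of_monotone_of_isBigO_atBot hFmono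
    (fun x => hF x ▸ ENNReal.toReal_nonneg) (fun x => (exp_pos (s' * x)).ne') hmarginal
  exact tendsto_comp_rightInverse_div_nhdsGT_zero (J := fun x => P.real {ω | X₁ ω ≤ x ∧ X₂ ω ≤ x})
    hFmono hFpos (eventually_of_mem (Ioo_mem_nhdsGT one_pos) hFinv)
    ((hjoint.trans_isLittleO (isLittleO_exp_mul_atBot hs's)).trans_isBigO hmarginal)
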